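/- (Recursive shape computation) Let p_1,...,p_k be all the maximal elements of a finite poset P, and suppose the Greene shapes λ(P - {p_1}) = ... = λ(P - {p_k}) = λ' all coincide. Then λ(P) is obtained from λ' by adding one box to the k-th row: λ_k(P) = λ'_k + 1 and λ_i(P) = λ'_i for i ≠ k. -/

import Mathlib

open Finset

/-- `cMax α k` is the maximal cardinality of a union of `k` pairwise disjoint chains
in the finite poset `α`. -/
noncomputable def cMax (α : Type*) [PartialOrder α] [Fintype α] [DecidableEq α] (k : ℕ) : ℕ :=
  sSup {n : ℕ | ∃ f : Fin k → Finset α,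
    (∀ i, IsChain (· ≤ ·) (↑(f i) : Set α)) ∧
    Pairwise (Function.onFun Disjoint f) ∧
    n = (Finset.univ.biUnion f).card}

/-- `aMax α k` is the maximal cardinality of a union of `k` pairwise disjoint antichains
in the finite poset `α`. -/
noncomputable def aMax (α : Type*) [PartialOrder α] [Fintype α] [DecidableEq α] (k : ℕ) : ℕ :=
  sSup {n : ℕ | ∃ f : Fin k → Finset α,
    (∀ i, IsAntichain (· ≤ ·) (↑(f i) : Set α)) ∧
    Pairwise (Function.onFun Disjoint f) ∧
    n = (Finset.univ.biUnion f).card}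

/-- The `k`-th row length of the Greene shape `λ(α)`. -/
noncomputable def lam (α : Type*) [PartialOrder α] [Fintype α] [DecidableEq α] (k : ℕ) : ℕ :=
  cMax α k - cMax α (k - 1)

/-- The `k`-th column length of the Greene shape, `μ_k = a_k - a_{k-1}`. -/
noncomputable def mu (α : Type*) [PartialOrder α] [Fintype α] [DecidableEq α] (k : ℕ) : ℕ :=
  aMax α k - aMax α (k - 1)

/-!
Removing a maximal element `p` lowers `c_i` by `0` or `1`, and by an amount independent of `p`,
since all the shapes `λ(P - p)` agree. For `i < k`, `i` chains cannot contain all `k` maximal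
elements, so some removal leaves `c_i` unchanged. For `i ≥ k`, Greene and Kleitman's duality gives
a set `B` and a number `l` such that chains in `B` have at most `l` elements and
`c_i(P) = |P \ B| + i l`. If no removal lowered `c_i`, then for each maximal `p` there would be
an optimal family of `i` chains avoiding `p`. By complementary slackness the family covers `P \ B`,
so `p ∈ B`. Since thus all maximal elements lie in `B` and each chain of the family meets `B` in `l`
elements, each of them contains a maximal element of `P`, as it could be extended inside `B`
otherwise. This produces `i ≥ k` maximal elements other than `p`, a contradiction.

The duality is linear programming duality for an assignment problem on the bipartite graph with
both sides `P ⊕ Fin i`: a permutation that moves elements of `P` upwards splits `P` into `i` chains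
and some fixed points.
-/

/-! ### Assignment duality -/

section Assignment

variable {V W : Type*} {E : V → W → Prop} {w : V → W → ℤ} {u : V → ℤ} {v : W → ℤ}

/-- Feasibility of `(u, v)` for the linear program dual to the minimum-cost assignment problem with
costs `w` on the bipartite graph `E`. -/
def IsDualFeasible (E : V → W → Prop) (w : V → W → ℤ) (u : V → ℤ) (v : W → ℤ) : Prop :=
  ∀ r c, E r c → u r + v c ≤ w r c

variable [Fintype V] [Fintype W]

theorem IsDualFeasible.sum_add_sum_le (h : IsDualFeasible E w u v) {σ : V ≃ W}
    (hσ : ∀ r, E r (σ r)) : ∑ r, u r + ∑ c, v c ≤ ∑ r, w r (σ r) := by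
  rw [← Equiv.sum_comp σ v, ← sum_add_distrib]
  exact sum_le_sum fun r _ => h r _ (hσ r)

theorem exists_isDualFeasible_forall_sum_le (w : V → W → ℤ) {σ : V ≃ W} (hσ : ∀ r, E r (σ r)) :
    ∃ u v, IsDualFeasible E w u v ∧
      ∀ u' v', IsDualFeasible E w u' v' → ∑ r, u' r + ∑ c, v' c ≤ ∑ r, u r + ∑ c, v c := by
  have hfeasible : IsDualFeasible E w (fun r => -∑ c, |w r c|) 0 := fun r c _ => by
    have hc := single_le_sum (fun c _ => abs_nonneg (w r c)) (mem_univ c)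
    have := neg_abs_le (w r c)
    simp only [Pi.zero_apply]
    linarith
  obtain ⟨_, ⟨u, v, huv, rfl⟩, hmax⟩ := Int.exists_greatest_of_bdd
    (P := fun n => ∃ u v, IsDualFeasible E w u v ∧ ∑ r, u r + ∑ c, v c = n)
    ⟨_, by rintro _ ⟨u, v, huv, rfl⟩; exact huv.sum_add_sum_le hσ⟩ ⟨_, _, _, hfeasible, rfl⟩
  exact ⟨u, v, huv, fun u' v' h => hmax _ ⟨u', v', h, rfl⟩⟩

/-- The improvement step of the Hungarian method. -/
theorem IsDualFeasible.exists_sum_lt (h : IsDualFeasible E w u v) {S : Finset V} {T : Finset W}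
    (hST : ∀ r ∈ S, ∀ c, E r c → u r + v c = w r c → c ∈ T) (hcard : #T < #S) :
    ∃ u' v', IsDualFeasible E w u' v' ∧ ∑ r, u r + ∑ c, v c < ∑ r, u' r + ∑ c, v' c := by
  classical
  refine ⟨fun r => u r + if r ∈ S then 1 else 0, fun c => v c - if c ∈ T then 1 else 0, ?_, ?_⟩
  · intro r c hrc
    have hle := h r c hrc
    have htight := fun hr => hST r hr c hrc
    grind
  · simp only [sum_add_distrib, sum_sub_distrib, sum_boole, filter_univ_mem]
    omega

omit [Fintype V] [Fintype W] in
/-- Egerváry's theorem. At a maximal dual solution the tight edges satisfy Hall's condition, since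
a violation would allow an improvement. -/
theorem exists_isDualFeasible_forall_eq [Finite V] (w : V → W → ℤ) {σ : V ≃ W}
    (hσ : ∀ r, E r (σ r)) :
    ∃ u v, IsDualFeasible E w u v ∧
      ∃ τ : V ≃ W, (∀ r, E r (τ r)) ∧ ∀ r, u r + v (τ r) = w r (τ r) := by
  classical
  have := Fintype.ofFinite V
  have := Fintype.ofEquiv V σ
  obtain ⟨u, v, huv, hmax⟩ := exists_isDualFeasible_forall_sum_le w hσ
  let tight (r : V) : Finset W := {c | E r c ∧ u r + v c = w r c}
  have hall (S : Finset V) : #S ≤ #(S.biUnion tight) := by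
    by_contra! hlt
    obtain ⟨u', v', huv', hsum⟩ := huv.exists_sum_lt
      (fun r hr c hE hc => mem_biUnion.2 ⟨r, hr, by simp [tight, hE, hc]⟩) hlt
    exact (hmax u' v' huv').not_gt hsum
  obtain ⟨g, hg, hgt⟩ := (all_card_le_biUnion_card_iff_exists_injective tight).1 hall
  have hbij := (Fintype.bijective_iff_injective_and_card g).2 ⟨hg, Fintype.card_congr σ⟩
  simp only [tight, mem_filter_univ] at hgt
  exact ⟨u, v, huv, Equiv.ofBijective g hbij, fun r => (hgt r).1, fun r => (hgt r).2⟩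

end Assignment

/-! ### Families of disjoint chains -/

/-- A family of pairwise disjoint finite chains. Members may be empty. -/
structure IsChainFamily {α ι : Type*} [LE α] (f : ι → Finset α) : Prop where
  isChain : ∀ a, IsChain (· ≤ ·) (f a : Set α)
  disjoint : Pairwise (Function.onFun Disjoint f)

namespace IsChainFamily

variable {α β ι κ : Type*} [LE α] [LE β] {f : ι → Finset α}

theorem map (hf : IsChainFamily f) (e : α ↪o β) :
    IsChainFamily fun a => (f a).map e.toEmbedding where
  isChain a := by
    simpa using (hf.isChain a).image e
  disjoint _ _ hab := (disjoint_map _).2 (hf.disjoint hab)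

theorem subtype (hf : IsChainFamily f) (q : α → Prop) [DecidablePred q] :
    IsChainFamily fun a => (f a).subtype q where
  isChain a _ hx _ hy hxy :=
    hf.isChain a (mem_subtype.1 hx) (mem_subtype.1 hy) (Subtype.coe_ne_coe.2 hxy)
  disjoint _ _ hab := disjoint_left.2 fun _ hx hy =>
    disjoint_left.1 (hf.disjoint hab) (mem_subtype.1 hx) (mem_subtype.1 hy)

theorem extend_empty (hf : IsChainFamily f) {e : ι → κ} (he : e.Injective) :
    IsChainFamily (Function.extend e f fun _ => ∅) where
  isChain b := by
    by_cases hb : ∃ a, e a = b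
    · obtain ⟨a, rfl⟩ := hb
      simpa [he.extend_apply] using hf.isChain a
    · simp [Function.extend_apply' _ _ _ hb]
  disjoint b c hbc := by
    by_cases hb : ∃ a, e a = b
    · by_cases hc : ∃ a, e a = c
      · obtain ⟨a, rfl⟩ := hb
        obtain ⟨a', rfl⟩ := hc
        simpa [Function.onFun, he.extend_apply] using hf.disjoint (ne_of_apply_ne e hbc)
      · simp [Function.onFun, Function.extend_apply' _ _ _ hc]
    · simp [Function.onFun, Function.extend_apply' _ _ _ hb]

theorem eq_of_mem (hf : IsChainFamily f) {a b : ι} {x : α} (ha : x ∈ f a) (hb : x ∈ f b) : a = b :=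
  by_contra fun hab => disjoint_left.1 (hf.disjoint hab) ha hb

theorem card_le_of_forall_exists_mem [Fintype ι] (hf : IsChainFamily f) {s : Finset α}
    (h : ∀ a, ∃ x ∈ s, x ∈ f a) : Fintype.card ι ≤ #s := by
  refine card_le_card_of_forall_subsingleton (fun a x => x ∈ f a) (s := univ) (fun a _ => h a) ?_
  exact fun x _ a ha b hb => hf.eq_of_mem ha.2 hb.2

variable [Fintype ι] [DecidableEq α]

theorem exists_mem_notMem_biUnion (hf : IsChainFamily f) {A : Finset α}
    (hA : IsAntichain (· ≤ ·) (A : Set α)) (hcard : Fintype.card ι < #A) :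
    ∃ p ∈ A, p ∉ univ.biUnion f := by
  by_contra! hcover
  refine hcard.not_ge (card_le_card_of_forall_subsingleton (· ∈ f ·) (t := univ) ?_ ?_)
  · simpa using hcover
  · exact fun a _ => inter_subsingleton_of_isAntichain_of_isChain hA (hf.isChain a)

variable [Fintype α]

/-- Complementary slackness in the Greene–Kleitman theorem. -/
theorem compl_subset_and_card_inter_eq (hf : IsChainFamily f) {B : Finset α} {l : ℕ}
    (hB : ∀ C ⊆ B, IsChain (· ≤ ·) (C : Set α) → #C ≤ l)
    (hcard : #Bᶜ + Fintype.card ι * l ≤ #(univ.biUnion f)) :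
    Bᶜ ⊆ univ.biUnion f ∧ ∀ a, #(f a ∩ B) = l := by
  have hle (a : ι) : #(f a ∩ B) ≤ l :=
    hB _ inter_subset_right ((hf.isChain a).mono (by simp))
  have hsum_le : ∑ a, #(f a ∩ B) ≤ Fintype.card ι * l := by
    simpa using sum_le_card_nsmul univ _ l fun a _ => hle a
  have hinter : #(univ.biUnion f ∩ B) ≤ ∑ a, #(f a ∩ B) := by
    rw [biUnion_inter]
    exact card_biUnion_le
  have hsplit : #(univ.biUnion f ∩ B) + #(univ.biUnion f ∩ Bᶜ) = #(univ.biUnion f) := by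
    rw [← sdiff_eq_inter_compl, card_inter_add_card_sdiff]
  have hcompl_le : #(univ.biUnion f ∩ Bᶜ) ≤ #Bᶜ := card_le_card inter_subset_right
  constructor
  · exact inter_eq_right.1 (eq_of_subset_of_card_le inter_subset_right (by omega))
  · have hsum : ∑ a, #(f a ∩ B) = ∑ _a : ι, l := by
      simp only [sum_const, card_univ, smul_eq_mul]
      omega
    exact fun a => (sum_eq_sum_iff_of_le fun a _ => hle a).1 hsum a (mem_univ a)

end IsChainFamily

/-! ### The numbers `cMax` -/

section cMax

variable {α : Type*} [PartialOrder α] [Fintype α] [DecidableEq α] {k : ℕ}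

theorem bddAbove_card_chains (α : Type*) [PartialOrder α] [Finite α] [DecidableEq α] (k : ℕ) :
    BddAbove {n : ℕ | ∃ f : Fin k → Finset α, (∀ i, IsChain (· ≤ ·) (↑(f i) : Set α)) ∧
      Pairwise (Function.onFun Disjoint f) ∧ n = (Finset.univ.biUnion f).card} :=
  have := Fintype.ofFinite α
  ⟨Fintype.card α, by rintro _ ⟨f, -, -, rfl⟩; exact card_le_univ _⟩

theorem IsChainFamily.card_le_cMax {f : Fin k → Finset α} (hf : IsChainFamily f) :
    #(univ.biUnion f) ≤ cMax α k :=
  le_csSup (bddAbove_card_chains α k) ⟨f, hf.isChain, hf.disjoint, rfl⟩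

theorem exists_isChainFamily_card_eq_cMax (α : Type*) [PartialOrder α] [Fintype α] [DecidableEq α]
    (k : ℕ) : ∃ f : Fin k → Finset α, IsChainFamily f ∧ #(univ.biUnion f) = cMax α k := by
  obtain ⟨f, hchain, hdisj, hcard⟩ := Nat.sSup_mem
    (by exact ⟨_, fun _ => ∅, by simp, fun _ _ _ => by simp [Function.onFun], rfl⟩)
    (bddAbove_card_chains α k)
  exact ⟨f, ⟨hchain, hdisj⟩, hcard.symm⟩

@[simp]
theorem cMax_zero : cMax α 0 = 0 := by
  obtain ⟨f, -, hf⟩ := exists_isChainFamily_card_eq_cMax α 0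
  simp [← hf]

theorem cMax_mono : Monotone (cMax α) := by
  intro k m hkm
  obtain ⟨f, hf, hcard⟩ := exists_isChainFamily_card_eq_cMax α k
  have he := Fin.castLE_injective hkm
  rw [← hcard]
  refine le_trans (card_le_card ?_) (hf.extend_empty he).card_le_cMax
  refine biUnion_subset.2 fun a _ => ?_
  rw [← he.extend_apply f (fun _ => ∅) a]
  exact subset_biUnion_of_mem _ (mem_univ _)

theorem cMax_eq_sum_lam (k : ℕ) : cMax α k = ∑ i ∈ range k, lam α (i + 1) := by
  simp [lam, sum_range_tsub cMax_mono]

theorem IsChainFamily.card_filter_le_cMax {f : Fin k → Finset α} (hf : IsChainFamily f)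
    (q : α → Prop) [DecidablePred q] : #{x ∈ univ.biUnion f | q x} ≤ cMax {x // q x} k := by
  have hunion : univ.biUnion (fun a => (f a).subtype q) = (univ.biUnion f).subtype q := by
    ext x
    simp
  rw [← card_subtype, ← hunion]
  exact (hf.subtype q).card_le_cMax

theorem exists_isChainFamily_card_eq_cMax_subtype (q : α → Prop) [DecidablePred q] (k : ℕ) :
    ∃ f : Fin k → Finset α, IsChainFamily f ∧ (∀ x ∈ univ.biUnion f, q x) ∧
      #(univ.biUnion f) = cMax {x // q x} k := by
  obtain ⟨f, hf, hcard⟩ := exists_isChainFamily_card_eq_cMax {x // q x} k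
  have hunion : univ.biUnion (fun a => (f a).map (.subtype q)) =
      (univ.biUnion f).map (.subtype q) := by
    simp only [map_eq_image, biUnion_image]
  refine ⟨_, hf.map (OrderEmbedding.subtype q), ?_, ?_⟩
  · intro x hx
    obtain ⟨y, -, rfl⟩ := mem_map.1 (hunion ▸ hx)
    exact y.2
  · rw [← hcard, ← card_map (.subtype q), ← hunion]
    rfl

theorem cMax_subtype_le (q : α → Prop) [DecidablePred q] (k : ℕ) :
    cMax {x // q x} k ≤ cMax α k := by
  obtain ⟨f, hf, -, hcard⟩ := exists_isChainFamily_card_eq_cMax_subtype q k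
  exact hcard ▸ hf.card_le_cMax

theorem cMax_le_cMax_subtype_add_card (q : α → Prop) [DecidablePred q] (k : ℕ) :
    cMax α k ≤ cMax {x // q x} k + #{x | ¬q x} := by
  obtain ⟨f, hf, hcard⟩ := exists_isChainFamily_card_eq_cMax α k
  rw [← hcard, ← card_filter_add_card_filter_not q]
  exact add_le_add (hf.card_filter_le_cMax q)
    (card_le_card (filter_subset_filter _ (subset_univ _)))

theorem cMax_le_cMax_ne_add_one (p : α) (k : ℕ) : cMax α k ≤ cMax {x : α // x ≠ p} k + 1 := by
  simpa [filter_eq'] using cMax_le_cMax_subtype_add_card (· ≠ p) k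

theorem exists_mem_cMax_le_cMax_ne {A : Finset α} (hA : IsAntichain (· ≤ ·) (A : Set α))
    (hk : k < #A) : ∃ p ∈ A, cMax α k ≤ cMax {x : α // x ≠ p} k := by
  obtain ⟨f, hf, hcard⟩ := exists_isChainFamily_card_eq_cMax α k
  obtain ⟨p, hpA, hp⟩ := hf.exists_mem_notMem_biUnion hA (by simpa using hk)
  refine ⟨p, hpA, ?_⟩
  have hle := hf.card_filter_le_cMax (· ≠ p)
  rwa [filter_true_of_mem fun x hx => ne_of_mem_of_not_mem hx hp, hcard] at hle

end cMax

/-! ### Greene–Kleitman duality -/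

section Trail

open Relation

variable {α ι : Type*}

/-- The relation "`σ` sends `x` to `y`" between elements of the left summand. -/
def InlStep (σ : Equiv.Perm (α ⊕ ι)) (x y : α) : Prop := σ (.inl x) = .inl y

/-- The elements of the left summand that the orbit of `inr a` under `σ` visits before its first
return to the right summand. -/
noncomputable def trail [Fintype α] (σ : Equiv.Perm (α ⊕ ι)) (a : ι) : Finset α :=
  open Classical in {x | ∃ y, σ (.inr a) = .inl y ∧ ReflTransGen (InlStep σ) y x}

variable {σ : Equiv.Perm (α ⊕ ι)}

theorem mem_trail [Fintype α] {a : ι} {x : α} :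
    x ∈ trail σ a ↔ ∃ y, σ (.inr a) = .inl y ∧ ReflTransGen (InlStep σ) y x := by
  simp [trail]

theorem InlStep.rightUnique : Relator.RightUnique (InlStep σ) := fun _ _ _ hy hz =>
  Sum.inl_injective (hy.symm.trans hz)

theorem InlStep.leftUnique : Relator.LeftUnique (InlStep σ) := fun _ _ _ hx hy =>
  Sum.inl_injective (σ.injective (hx.trans hy.symm))

theorem InlStep.total_of_reflTransGen {x y z : α} (hx : ReflTransGen (InlStep σ) x z)
    (hy : ReflTransGen (InlStep σ) y z) :
    ReflTransGen (InlStep σ) x y ∨ ReflTransGen (InlStep σ) y x := by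
  have htotal := ReflTransGen.total_of_right_unique InlStep.leftUnique.flip
    (reflTransGen_swap.2 hx) (reflTransGen_swap.2 hy)
  exact (htotal.imp reflTransGen_swap.1 reflTransGen_swap.1).symm

theorem InlStep.eq_of_reflTransGen {a b : ι} {x y : α} (hx : σ (.inr a) = .inl x)
    (hy : σ (.inr b) = .inl y) (hxy : ReflTransGen (InlStep σ) x y) : a = b := by
  obtain rfl | ⟨z, -, hz⟩ := hxy.cases_tail
  · exact Sum.inr_injective (σ.injective (hx.trans hy.symm))
  · exact absurd (σ.injective (hz.trans hy.symm)) Sum.inl_ne_inr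

variable [Fintype α]

theorem isChainFamily_trail [Preorder α] (hσ : ∀ x y, InlStep σ x y → x ≤ y) :
    IsChainFamily (trail σ) where
  isChain a x hx y hy _ := by
    obtain ⟨z, hz, hzx⟩ := mem_trail.1 hx
    obtain ⟨z', hz', hzy⟩ := mem_trail.1 hy
    obtain rfl : z = z' := Sum.inl_injective (hz.symm.trans hz')
    exact (ReflTransGen.total_of_right_unique InlStep.rightUnique hzx hzy).imp
      (reflTransGen_le_of_le hσ _ _) (reflTransGen_le_of_le hσ _ _)
  disjoint a b hab := disjoint_left.2 fun x hxa hxb => hab <| by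
    obtain ⟨y, hy, hyx⟩ := mem_trail.1 hxa
    obtain ⟨z, hz, hzx⟩ := mem_trail.1 hxb
    rcases InlStep.total_of_reflTransGen hyx hzx with h | h
    · exact InlStep.eq_of_reflTransGen hy hz h
    · exact (InlStep.eq_of_reflTransGen hz hy h).symm

theorem exists_mem_trail [PartialOrder α] (hσ : ∀ x y, InlStep σ x y → x ≤ y) {x : α}
    (hx : σ (.inl x) ≠ .inl x) : ∃ a, x ∈ trail σ a := by
  induction x using WellFoundedLT.induction with
  | ind x ih =>
    obtain ⟨y | a, hpre⟩ := σ.surjective (.inl x)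
    · have hyx : y ≠ x := by rintro rfl; exact hx hpre
      obtain ⟨a, ha⟩ := ih y ((hσ y x hpre).lt_of_ne hyx) (by simpa [hpre] using hyx.symm)
      obtain ⟨z, hz, hzy⟩ := mem_trail.1 ha
      exact ⟨a, mem_trail.2 ⟨z, hz, hzy.tail hpre⟩⟩
    · exact ⟨a, mem_trail.2 ⟨x, hpre, .refl⟩⟩

end Trail

section GreeneKleitman

variable {α ι : Type*}

/-- The admissible edges of the assignment problem that encodes families of chains indexed by `ι`:
elements of `α` may only move upwards. -/
def ChainEdge [LE α] : α ⊕ ι → α ⊕ ι → Prop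
  | .inl x, .inl y => x ≤ y
  | _, _ => True

/-- The costs of the assignment problem that encodes families of chains: `1` for each element of
`α` that stays in place, so that the total cost counts the elements not covered by chains. -/
def chainCost [DecidableEq α] : α ⊕ ι → α ⊕ ι → ℤ
  | .inl x, .inl y => if x = y then 1 else 0
  | _, _ => 0

theorem card_le_of_isChain_of_forall_add_eq_one [PartialOrder α] {u v : α → ℤ} {a b : ℤ}
    (hu : ∀ x, u x ≤ a) (hv : ∀ x, v x ≤ b) (huv : ∀ x y, x < y → u x + v y ≤ 0) {C : Finset α}
    (hC : IsChain (· ≤ ·) (C : Set α)) (htight : ∀ x ∈ C, u x + v x = 1) :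
    #C ≤ (a + b).toNat := by
  have hmaps : Set.MapsTo v C (Icc (1 - a) b : Finset ℤ) := fun x hx => by
    have hx1 := htight x hx
    have hxu := hu x
    simp only [coe_Icc, Set.mem_Icc]
    exact ⟨by linarith, hv x⟩
  have hinj : Set.InjOn v C := fun x hx y hy hxy => by
    by_contra hne
    have hx1 := htight x hx
    have hy1 := htight y hy
    rcases hC hx hy hne with h | h
    · linarith [huv x y (h.lt_of_ne hne)]
    · linarith [huv y x (h.lt_of_ne' hne)]
  have hcard := card_le_card_of_injOn v hmaps hinj
  rw [Int.card_Icc] at hcard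
  exact hcard.trans (by omega)

variable [PartialOrder α] [Fintype α] [DecidableEq α] [Fintype ι]

theorem IsDualFeasible.exists_chain_bound [Nonempty ι] {u v : α ⊕ ι → ℤ}
    (h : IsDualFeasible ChainEdge chainCost u v) :
    ∃ (B : Finset α) (l : ℕ), (∀ C ⊆ B, IsChain (· ≤ ·) (C : Set α) → #C ≤ l) ∧
      ∑ r, u r + ∑ c, v c + Fintype.card ι * l ≤ #B := by
  obtain ⟨a, ha⟩ := Finite.exists_max fun a : ι => u (.inr a)
  obtain ⟨b, hb⟩ := Finite.exists_max fun b : ι => v (.inr b)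
  have hul (x : α) : u (.inl x) ≤ -v (.inr b) := by
    linarith [show _ ≤ (0 : ℤ) from h (.inl x) (.inr b) trivial]
  have hvl (x : α) : v (.inl x) ≤ -u (.inr a) := by
    linarith [show _ ≤ (0 : ℤ) from h (.inr a) (.inl x) trivial]
  have hab : u (.inr a) + v (.inr b) ≤ 0 := h (.inr a) (.inr b) trivial
  have hlt (x y : α) (hxy : x < y) : u (.inl x) + v (.inl y) ≤ 0 := by
    simpa [chainCost, hxy.ne] using h (.inl x) (.inl y) hxy.le
  have hdiag (x : α) : u (.inl x) + v (.inl x) ≤ 1 := by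
    simpa [chainCost] using h (.inl x) (.inl x) le_rfl
  refine ⟨({x | u (.inl x) + v (.inl x) = 1} : Finset α), (-v (.inr b) + -u (.inr a)).toNat,
    fun C hCB hC => card_le_of_isChain_of_forall_add_eq_one hul hvl hlt hC
      fun x hx => mem_filter_univ x |>.1 (hCB hx), ?_⟩
  have hsum_inl : ∑ x : α, (u (.inl x) + v (.inl x)) ≤
      #({x | u (.inl x) + v (.inl x) = 1} : Finset α) := by
    rw [card_filter, Nat.cast_sum]
    exact sum_le_sum fun x _ => by have := hdiag x; grind
  have hsum_inr : ∑ c : ι, (u (.inr c) + v (.inr c)) ≤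
      Fintype.card ι * (u (.inr a) + v (.inr b)) := by
    simpa using sum_le_card_nsmul univ _ _ fun c _ => add_le_add (ha c) (hb c)
  rw [Int.toNat_of_nonneg (by linarith), Fintype.sum_sum_type, Fintype.sum_sum_type]
  rw [sum_add_distrib] at hsum_inl hsum_inr
  linarith

theorem card_compl_biUnion_trail_le_sum_chainCost {σ : Equiv.Perm (α ⊕ ι)}
    (hσ : ∀ x y, InlStep σ x y → x ≤ y) :
    (#(univ.biUnion (trail σ))ᶜ : ℤ) ≤ ∑ r, chainCost r (σ r) := by
  have hnonneg (r c : α ⊕ ι) : 0 ≤ chainCost r c := by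
    unfold chainCost
    split <;> positivity
  have hfixed (x : α) (hx : x ∈ (univ.biUnion (trail σ))ᶜ) : σ (.inl x) = .inl x := by
    by_contra hne
    obtain ⟨a, ha⟩ := exists_mem_trail hσ hne
    exact mem_compl.1 hx (mem_biUnion.2 ⟨a, mem_univ a, ha⟩)
  calc (#(univ.biUnion (trail σ))ᶜ : ℤ)
    _ = ∑ x ∈ (univ.biUnion (trail σ))ᶜ, chainCost (.inl x) (σ (.inl x)) := by
      simp only [card_eq_sum_ones, Nat.cast_sum]
      exact sum_congr rfl fun x hx => by simp [hfixed x hx, chainCost]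
    _ = ∑ r ∈ (univ.biUnion (trail σ))ᶜ.map .inl, chainCost r (σ r) := by simp
    _ ≤ ∑ r, chainCost r (σ r) := sum_le_univ_sum_of_nonneg fun r => hnonneg r _

/-- The hard direction of the Greene–Kleitman theorem. -/
theorem exists_card_compl_add_mul_le_cMax (α : Type*) [PartialOrder α] [Fintype α] [DecidableEq α]
    (k : ℕ) : ∃ (B : Finset α) (l : ℕ), (∀ C ⊆ B, IsChain (· ≤ ·) (C : Set α) → #C ≤ l) ∧
      #Bᶜ + k * l ≤ cMax α k := by
  rcases k.eq_zero_or_pos with rfl | hk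
  · exact ⟨univ, Fintype.card α, fun C _ _ => card_le_univ C, by simp⟩
  have : Nonempty (Fin k) := ⟨⟨0, hk⟩⟩
  have hrefl (r : α ⊕ Fin k) : ChainEdge r (Equiv.refl _ r) := by
    rcases r with _ | _
    · exact le_rfl
    · trivial
  obtain ⟨u, v, huv, σ, hσ, htight⟩ := exists_isDualFeasible_forall_eq chainCost hrefl
  have hup (x y : α) (hxy : InlStep σ x y) : x ≤ y := by
    have hx := hσ (.inl x)
    rwa [show σ (.inl x) = .inl y from hxy] at hx
  obtain ⟨B, l, hB, hBl⟩ := huv.exists_chain_bound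
  refine ⟨B, l, hB, le_trans ?_ (isChainFamily_trail hup).card_le_cMax⟩
  have hcost := card_compl_biUnion_trail_le_sum_chainCost hup
  simp only [← htight, sum_add_distrib, Equiv.sum_comp σ v] at hcost
  have hB_compl := card_add_card_compl B
  have htrail_compl := card_add_card_compl (univ.biUnion (trail σ))
  zify at *
  simp only [Fintype.card_fin] at hBl
  linarith

end GreeneKleitman

/-! ### Removing a maximal element -/

section Removal

variable {α : Type*}

theorem exists_mem_upperBounds_isMax_of_isChain [Preorder α] [Finite α] [Nonempty α] {C : Set α}
    (hC : IsChain (· ≤ ·) C) : ∃ q ∈ upperBounds C, IsMax q := by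
  have hbdd : BddAbove C := by
    rcases C.eq_empty_or_nonempty with rfl | hne
    · exact bddAbove_empty
    · obtain ⟨t, ht⟩ := C.toFinite.exists_maximal hne
      exact ⟨t, fun x hx => hC.directedOn.le_of_maximal ht hx⟩
  obtain ⟨q, hq⟩ := (upperBounds C).toFinite.exists_maximal hbdd
  exact ⟨q, hq.prop, fun y hy => hq.le_of_ge (upperBounds_mono_mem hy hq.prop) hy⟩

/-- A chain of maximum size in `B` cannot be extended by a maximal element lying above it. -/
theorem exists_isMax_mem_of_card_le [Preorder α] [Finite α] [Nonempty α] {B C : Finset α}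
    (hmax : ∀ q, IsMax q → q ∈ B) (hCB : C ⊆ B) (hC : IsChain (· ≤ ·) (C : Set α))
    (hcard : ∀ D ⊆ B, IsChain (· ≤ ·) (D : Set α) → #D ≤ #C) : ∃ q ∈ C, IsMax q := by
  classical
  obtain ⟨q, hle, hq⟩ := exists_mem_upperBounds_isMax_of_isChain hC
  refine ⟨q, ?_, hq⟩
  by_contra hqC
  have hins := hcard (insert q C) (insert_subset (hmax q hq) hCB) (by
    rw [coe_insert]
    exact hC.insert fun x hx _ => .inr (hle hx))
  rw [card_insert_of_notMem hqC] at hins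
  omega

variable [PartialOrder α] [Fintype α] [DecidableEq α]

theorem exists_mem_cMax_ne_lt {s : Finset α} (hs : ∀ q, IsMax q → q ∈ s) (hne : s.Nonempty) {k : ℕ}
    (hk : #s ≤ k) : ∃ p ∈ s, cMax {x : α // x ≠ p} k < cMax α k := by
  by_contra! hle
  obtain ⟨B, l, hB, hBl⟩ := exists_card_compl_add_mul_le_cMax α k
  have havoid : ∀ p ∈ s, p ∈ B ∧ ∃ f : Fin k → Finset α, IsChainFamily f ∧
      p ∉ univ.biUnion f ∧ ∀ a, #(f a ∩ B) = l := fun p hp => by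
    obtain ⟨f, hf, hfp, hcard⟩ := exists_isChainFamily_card_eq_cMax_subtype (· ≠ p) k
    have hpf : p ∉ univ.biUnion f := fun h => hfp p h rfl
    obtain ⟨hsub, hl⟩ := hf.compl_subset_and_card_inter_eq hB
      (by simpa only [Fintype.card_fin, hcard] using hBl.trans (hle p hp))
    exact ⟨by_contra fun hpB => hpf (hsub (mem_compl.2 hpB)), f, hf, hpf, hl⟩
  obtain ⟨p, hp⟩ := hne
  have : Nonempty α := ⟨p⟩
  obtain ⟨-, f, hf, hpf, hl⟩ := havoid p hp
  have hmeet (a : Fin k) : ∃ q ∈ s.erase p, q ∈ f a := by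
    obtain ⟨q, hq, hqmax⟩ := exists_isMax_mem_of_card_le (fun q hq => (havoid q (hs q hq)).1)
      (inter_subset_right : f a ∩ B ⊆ B) ((hf.isChain a).mono (by simp)) (by rwa [hl a])
    have hqa := (mem_inter.1 hq).1
    have hqp : q ≠ p := ne_of_mem_of_not_mem (mem_biUnion.2 ⟨a, mem_univ a, hqa⟩) hpf
    exact ⟨q, mem_erase.2 ⟨hqp, hs q hqmax⟩, hqa⟩
  have hcard := hf.card_le_of_forall_exists_mem hmeet
  rw [Fintype.card_fin] at hcard
  exact (hk.trans hcard).not_gt (card_erase_lt_of_mem hp)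

theorem cMax_eq_cMax_ne_add_ite {s : Finset α} (hs : ∀ q, q ∈ s ↔ IsMax q) {p : α} (hp : p ∈ s)
    {k : ℕ} (heq : ∀ q ∈ s, cMax {x : α // x ≠ q} k = cMax {x : α // x ≠ p} k) :
    cMax α k = cMax {x : α // x ≠ p} k + if #s ≤ k then 1 else 0 := by
  have hge := cMax_subtype_le (· ≠ p) k
  have hle := cMax_le_cMax_ne_add_one p k
  split_ifs with hk
  · obtain ⟨q, hq, hlt_q⟩ := exists_mem_cMax_ne_lt (fun q => (hs q).2) ⟨p, hp⟩ hk
    rw [heq q hq] at hlt_q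
    omega
  · have hanti : IsAntichain (· ≤ ·) (s : Set α) := fun x hx y _ hxy hle =>
      hxy (((hs x).1 hx).eq_of_le hle)
    obtain ⟨q, hq, hle_q⟩ := exists_mem_cMax_le_cMax_ne hanti (not_le.1 hk)
    rw [heq q hq] at hle_q
    omega

end Removal

theorem recursive_shape_equal_case
    (α : Type*) [PartialOrder α] [Fintype α] [DecidableEq α] [Nonempty α]
    (ps : Finset α) (hps : ∀ x : α, x ∈ ps ↔ ∀ y : α, x ≤ y → y = x)
    (heq : ∀ p ∈ ps, ∀ q ∈ ps, ∀ i : ℕ,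
      lam {x : α // x ≠ p} i = lam {x : α // x ≠ q} i) :
    ∀ p ∈ ps, ∀ i : ℕ, 1 ≤ i →
      lam α i = lam {x : α // x ≠ p} i + (if i = ps.card then 1 else 0) := by
  intro p hp i hi
  have hmax (q : α) : q ∈ ps ↔ IsMax q := by
    rw [hps]
    exact ⟨fun h y hy => (h y hy).le, fun h y hy => (h.eq_of_le hy).symm⟩
  have hc (j : ℕ) :
      cMax α j = cMax {x : α // x ≠ p} j + if ps.card ≤ j then 1 else 0 :=
    cMax_eq_cMax_ne_add_ite hmax hp fun q hq => by
      simp only [cMax_eq_sum_lam, heq q hq p hp]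
  obtain ⟨j, rfl⟩ := Nat.exists_eq_add_of_le' hi
  have hmono : cMax {x : α // x ≠ p} j ≤ cMax {x : α // x ≠ p} (j + 1) := cMax_mono j.le_succ
  simp only [lam, Nat.add_sub_cancel, hc]
  split_ifs <;> omega
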